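/- For every τ > 0, setting f(τ) := Σ_{n=1}^∞ (−1)^{n−1} n sin(2πn/3) exp(−(2π/3) n² τ) and E(τ) := e^{−πτ/6} ∏_{n=1}^∞ (1 − e^{−4πnτ}), one has the open-channel identity (8/√3) · f(τ)/E(τ) = (6/τ) · ( Σ_{k∈ℤ} (k + 1/6) exp(−(π/τ)((3/2)(k+1/6)² − 1/24)) ) / ( ∏_{n=1}^∞ (1 − e^{−πn/τ}) ), where the sum over ℤ converges absolutely and the infinite product converges. -/

import Mathlib

open Real

/-- `f τ = Σ_{n=1}^∞ (−1)^{n−1} n sin(2πn/3) exp(−(2π/3) n² τ)`. The `n = 0` term vanishes,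
and for `n ≥ 1` one has `(−1)^{n+1} = (−1)^{n−1}`. -/
noncomputable def f (τ : ℝ) : ℝ :=
  ∑' n : ℕ, (-1 : ℝ) ^ (n + 1) * n * Real.sin (2 * π * n / 3) * Real.exp (-(2 * π / 3) * n ^ 2 * τ)

/-- The Dedekind eta function `η(2iτ) = e^{−πτ/6} ∏_{n=1}^∞ (1 − e^{−4πnτ})`. -/
noncomputable def dedekindEta (τ : ℝ) : ℝ :=
  Real.exp (-π * τ / 6) * ∏' n : ℕ, (1 - Real.exp (-4 * π * (n + 1) * τ))

/-!
The inversion `S : z ↦ -1 / z` matches the two numerators and, separately, the two denominators.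
Up to the factor `exp (π / (24 τ))`, the sum over `ℤ` is the odd theta kernel with characteristic
`1 / 6` at `3 / (2 τ)`. The signs in `f τ` shift its characteristic from `1 / 3` to
`1 / 2 - 1 / 3 = 1 / 6`, so that `f τ` is half the sine kernel at the inverse point `2 τ / 3`;
inversion exchanges the two kernels with weight `3 / 2`. Up to the same exponential factor, the
product of the `1 - exp (-π n / τ)` is the eta value at `i / (2 τ) = -1 / (2 i τ)`, which inversion
carries to `η (2 i τ)` with weight `1 / 2`. The exponential factors cancel in the quotient.
-/

section Theta

open HurwitzZeta

theorem hasSum_int_oddKernel_div (a c : ℝ) {m τ : ℝ} (h : 0 < m / τ) :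
    HasSum (fun k : ℤ ↦ (k + a) * rexp (-(π / τ) * (m * (k + a) ^ 2 - c)))
      (rexp (π / τ * c) * oddKernel a (m / τ)) := by
  refine ((hasSum_int_oddKernel a h).mul_left (rexp (π / τ * c))).congr_fun fun k ↦ ?_
  rw [mul_left_comm, ← Real.exp_add]
  ring_nf

theorem hasSum_nat_sinKernel_half_sub (b : ℝ) {t : ℝ} (ht : 0 < t) :
    HasSum (fun n : ℕ ↦ (-1) ^ (n + 1) * n * sin (2 * π * b * n) * rexp (-π * n ^ 2 * t))
      (sinKernel (1 / 2 - b : ℝ) t / 2) := by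
  refine ((hasSum_nat_sinKernel (1 / 2 - b) ht).div_const 2).congr_fun fun n ↦ ?_
  have hsin : sin (2 * π * (1 / 2 - b) * n) = (-1) ^ (n + 1) * sin (2 * π * b * n) := by
    rw [show 2 * π * (1 / 2 - b) * n = n * π - 2 * π * b * n by ring, sin_nat_mul_pi_sub]
    ring
  rw [hsin]
  ring

theorem f_eq_sinKernel {τ : ℝ} (hτ : 0 < τ) : f τ = sinKernel (1 / 6 : ℝ) (2 * τ / 3) / 2 := by
  have h := hasSum_nat_sinKernel_half_sub (1 / 3) (t := 2 * τ / 3) (by positivity)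
  rw [show (1 / 2 - 1 / 3 : ℝ) = 1 / 6 by norm_num] at h
  rw [← h.tsum_eq, f]
  refine tsum_congr fun n ↦ ?_
  ring_nf

theorem oddKernel_one_sixth_eq_f {τ : ℝ} (hτ : 0 < τ) :
    oddKernel (1 / 6 : ℝ) (3 / 2 / τ) = 4 * τ * √(2 * τ) / (3 * √3) * f τ := by
  have hinv : 1 / (3 / 2 / τ) = 2 * τ / 3 := by field_simp
  have hpow : 1 / (3 / 2 / τ) ^ (3 / 2 : ℝ) = 2 * τ * √(2 * τ) / (3 * √3) := by
    rw [← one_rpow (3 / 2), ← div_rpow zero_le_one (by positivity), hinv,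
      rpow_div_two_eq_sqrt _ (by positivity), sqrt_div (by positivity)]
    norm_cast
    rw [div_pow, pow_succ, pow_succ _ 2, sq_sqrt (by positivity), sq_sqrt zero_le_three]
  rw [oddKernel_functional_equation, hpow, hinv, f_eq_sinKernel hτ]
  ring

theorem hasSum_open_channel {τ : ℝ} (hτ : 0 < τ) :
    HasSum (fun k : ℤ ↦ (k + 1 / 6) * rexp (-(π / τ) * (3 / 2 * (k + 1 / 6 : ℝ) ^ 2 - 1 / 24)))
      (rexp (π / τ * (1 / 24)) * (4 * τ * √(2 * τ) / (3 * √3) * f τ)) := by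
  rw [← oddKernel_one_sixth_eq_f hτ]
  exact hasSum_int_oddKernel_div _ _ (by positivity)

end Theta

section Eta

open ModularForm

theorem multipliable_one_sub_pow_succ {R : Type*} [NormedCommRing R] [NormOneClass R]
    [CompleteSpace R] {q : R} (hq : ‖q‖ < 1) : Multipliable fun n : ℕ ↦ 1 - q ^ (n + 1) := by
  have hsum : Summable fun n : ℕ ↦ ‖q‖ ^ (n + 1) :=
    (summable_nat_add_iff 1).mpr (summable_geometric_of_lt_one (norm_nonneg q) hq)
  simpa only [sub_eq_add_neg] using multipliable_one_add_of_summable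
    (hsum.of_nonneg_of_le (fun _ ↦ norm_nonneg (-q ^ _)) fun n ↦ by
      simpa only [norm_neg] using norm_pow_le q (n + 1))

theorem multipliable_one_sub_exp_neg_mul {c : ℝ} (hc : 0 < c) :
    Multipliable fun n : ℕ ↦ 1 - rexp (-c * (n + 1)) := by
  refine (multipliable_one_sub_pow_succ (q := rexp (-c)) (by simpa)).congr fun n ↦ ?_
  rw [← Real.exp_nat_mul]
  push_cast
  ring_nf

theorem csqrt_ofReal_mul {r : ℝ} (hr : 0 ≤ r) (z : ℂ) :
    Complex.sqrt (r * z) = √r * Complex.sqrt z := by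
  rcases hr.eq_or_lt with rfl | hr
  · simp
  rcases eq_or_ne z 0 with rfl | hz
  · simp
  have hr' : (r : ℂ) ≠ 0 := mod_cast hr.ne'
  rw [sqrt_eq_exp (mul_ne_zero hr' hz), sqrt_eq_exp hz, Complex.log_ofReal_mul hr hz, add_div,
    Complex.exp_add, sqrt_eq_rpow, rpow_def_of_pos hr, mul_one_div]
  push_cast
  rfl

theorem eta_inv_mul_I {x : ℝ} (hx : 0 < x) :
    η ((x : ℂ)⁻¹ * Complex.I) = √x * η (x * Complex.I) := by
  have hinv : -1 / (x * Complex.I) = (x : ℂ)⁻¹ * Complex.I := by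
    rw [neg_div, one_div, mul_inv, Complex.inv_I, mul_neg, neg_neg]
  have hI : Complex.sqrt Complex.I ≠ 0 := by simp [Complex.sqrt]
  have hS := eta_comp_eq_csqrt_I_inv
    (show (x * Complex.I : ℂ) ∈ UpperHalfPlane.upperHalfPlaneSet by simpa using hx)
  simp only [Function.comp_apply, Pi.smul_apply, Pi.mul_apply, smul_eq_mul, hinv,
    csqrt_ofReal_mul hx.le] at hS
  rw [hS]
  field_simp

theorem ofReal_dedekindEta (τ : ℝ) : (dedekindEta τ : ℂ) = η (2 * τ * Complex.I) := by
  rw [dedekindEta, eta, Complex.ofReal_mul]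
  congr 1
  · rw [Function.Periodic.qParam, Complex.ofReal_exp]
    congr 1
    push_cast
    linear_combination (-π * τ / 6 : ℂ) * Complex.I_mul_I
  · refine (Complex.isUniformEmbedding_ofReal.isClosedEmbedding.map_tprod _
      (g := Complex.ofRealHom)).trans (tprod_congr fun n ↦ ?_)
    rw [eta_q_eq_cexp, Complex.ofRealHom_eq_coe]
    push_cast
    congr 2
    linear_combination (-4 * π * (n + 1) * τ : ℂ) * Complex.I_mul_I

theorem dedekindEta_ne_zero {τ : ℝ} (hτ : 0 < τ) : dedekindEta τ ≠ 0 := by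
  rw [← Complex.ofReal_ne_zero, ofReal_dedekindEta]
  exact eta_ne_zero (by simpa using hτ)

theorem dedekindEta_inv_four_mul {τ : ℝ} (hτ : 0 < τ) :
    dedekindEta (4 * τ)⁻¹ = √(2 * τ) * dedekindEta τ := by
  have h := eta_inv_mul_I (x := 2 * τ) (by positivity)
  rw [← Complex.ofReal_inj, Complex.ofReal_mul, ofReal_dedekindEta, ofReal_dedekindEta]
  push_cast at h ⊢
  rw [← h]
  ring_nf

theorem tprod_one_sub_exp_eq_dedekindEta {τ : ℝ} (hτ : 0 < τ) :
    ∏' n : ℕ, (1 - rexp (-π * (n + 1) / τ)) =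
      rexp (π / τ * (1 / 24)) * (√(2 * τ) * dedekindEta τ) := by
  have hexp : rexp (π / τ * (1 / 24)) * rexp (-π * (4 * τ)⁻¹ / 6) = 1 := by
    rw [← Real.exp_add, Real.exp_eq_one_iff]
    ring
  rw [← dedekindEta_inv_four_mul hτ, dedekindEta, ← mul_assoc, hexp, one_mul]
  refine tprod_congr fun n ↦ ?_
  field_simp

end Eta

/-- Open-channel identity: for every `τ > 0`,
`(8/√3) f(τ)/η(2iτ)
  = (6/τ) (Σ_{k∈ℤ} (k+1/6) exp(−(π/τ)((3/2)(k+1/6)² − 1/24))) / ∏_{n=1}^∞ (1 − e^{−πn/τ})`,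
where the sum over `ℤ` converges absolutely and the infinite product converges. -/
theorem open_channel_identity (τ : ℝ) (hτ : 0 < τ) :
    Summable (fun k : ℤ =>
      |((k : ℝ) + 1 / 6) * Real.exp (-(π / τ) * (3 / 2 * ((k : ℝ) + 1 / 6) ^ 2 - 1 / 24))|)
    ∧ Multipliable (fun n : ℕ => 1 - Real.exp (-π * (n + 1) / τ))
    ∧ 8 / Real.sqrt 3 * f τ / dedekindEta τ
      = 6 / τ *
        (∑' k : ℤ, ((k : ℝ) + 1 / 6) * Real.exp (-(π / τ) * (3 / 2 * ((k : ℝ) + 1 / 6) ^ 2 - 1 / 24)))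
        / ∏' n : ℕ, (1 - Real.exp (-π * (n + 1) / τ)) := by
  have hsum := hasSum_open_channel hτ
  refine ⟨hsum.summable.abs, ?_, ?_⟩
  · simpa only [neg_mul, div_mul_eq_mul_div, neg_div] using
      multipliable_one_sub_exp_neg_mul (div_pos pi_pos hτ)
  · have hη := dedekindEta_ne_zero hτ
    rw [hsum.tsum_eq, tprod_one_sub_exp_eq_dedekindEta hτ]
    field_simp
    ring
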